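/- Let γ : ℝ → ℝ^D be a smooth (C^∞) curve parametrized by arc length, i.e. ‖γ'(t)‖ = 1 for all t, set x = γ(0), and let n be a unit vector with ⟨n, γ'(0)⟩ = 0 such that γ''(0) = κ_y · n for some κ_y ∈ ℝ. Fix κ₀ > 0, let r = 1/κ₀ and c = x + r n. If κ_y = κ₀ or κ_y = 2κ₀, then there exist constants C > 0 and ε > 0 such that for all s ∈ (0, ε), | r·arccos( ⟨x − c, γ(s) − c⟩ / (r ‖γ(s) − c‖) ) − s | ≤ C s⁴. -/

import Mathlib

open RealInnerProductSpace

open Asymptotics Filter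
open scoped Topology Nat EuclideanGeometry

/-!
Put `y s = γ s - γ 0`, `e = γ' 0` and `h s = ⟪n, y s⟫`, and let `w s` be the norm of the component
of `y s` orthogonal to `n`. The vector `γ s - c` is the hypotenuse of a right triangle with leg
`r - h s` along `γ 0 - c` and opposite leg `w s`, so the spherical distance is
`r * arctan (w s / (r - h s))`.

Differentiating `‖γ'‖ = 1` twice gives `⟪γ' 0, γ''' 0⟫ = -κ ^ 2`. Taylor's formula then yields
`h s = κ / 2 * s ^ 2 + O(s ^ 3)` and `⟪e, y s⟫ = s - κ ^ 2 / 6 * s ^ 3 + O(s ^ 4)`. The latter is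
also the expansion of `w s`: the orthogonal component is within `O(s ^ 3)` of `s • e`, and a vector
`v` satisfies `⟪e, v⟫ ≤ ‖v‖ ≤ ⟪e, v⟫ + ‖v - s • e‖ ^ 2 / (2 * s)`, the upper bound being
`2 * s * ‖v‖ ≤ s ^ 2 + ‖v‖ ^ 2`.

Composing with `arctan u = u - u ^ 3 / 3 + O(u ^ 5)`, the distance is
`s - (κ - 1 / r) * (κ - 2 / r) / 6 * s ^ 3 + O(s ^ 4)`.
-/

section Asymptotics

variable {l : Filter ℝ}

theorem isBigO_pow_mul_of_continuousAt (hl : l ≤ 𝓝 0) {g : ℝ → ℝ} (hg : ContinuousAt g 0)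
    (k : ℕ) : (fun s => s ^ k * g s) =O[l] fun s => s ^ k := by
  simpa only [mul_one] using
    ((isBigO_refl (fun s : ℝ => s ^ k) (𝓝 0)).mul hg.isBigO).mono hl

theorem isBigO_pow_pow_of_le (hl : l ≤ 𝓝 0) {k m : ℕ} (hkm : k ≤ m) :
    (fun s : ℝ => s ^ m) =O[l] fun s => s ^ k := by
  simpa only [← pow_add, Nat.add_sub_of_le hkm] using
    isBigO_pow_mul_of_continuousAt hl (continuous_pow (m - k)).continuousAt k

theorem isBigO_sub_taylor_sum {E : Type*} [NormedAddCommGroup E] [NormedSpace ℝ E]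
    {f : ℝ → E} {x₀ : ℝ} {m : ℕ} (hf : ContDiffAt ℝ (m + 1) f x₀) :
    (fun x => f x - ∑ k ∈ Finset.range (m + 1),
        ((k ! : ℝ)⁻¹ * (x - x₀) ^ k) • iteratedDeriv k f x₀)
      =O[𝓝 x₀] fun x => (x - x₀) ^ (m + 1) := by
  obtain ⟨u, hu, hfu⟩ := hf.contDiffOn le_rfl (by simp)
  obtain ⟨δ, hδ, hball⟩ := Metric.mem_nhds_iff.1 hu
  have hx₀ : x₀ ∈ Metric.ball x₀ δ := Metric.mem_ball_self hδ
  have htaylor := taylor_isLittleO (n := m + 1) (convex_ball x₀ δ) hx₀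
    (by exact_mod_cast hfu.mono hball)
  simp only [Metric.isOpen_ball.nhdsWithin_eq hx₀, taylor_within_apply,
    iteratedDerivWithin_of_isOpen Metric.isOpen_ball hx₀, Finset.sum_range_succ _ (m + 1)]
    at htaylor
  have htop : (fun x => (((m + 1)! : ℝ)⁻¹ * (x - x₀) ^ (m + 1)) • iteratedDeriv (m + 1) f x₀)
      =O[𝓝 x₀] fun x => (x - x₀) ^ (m + 1) := by
    simpa using ((isBigO_refl (fun x : ℝ => (x - x₀) ^ (m + 1)) (𝓝 x₀)).const_mul_left
      (((m + 1)! : ℝ)⁻¹)).smul (isBigO_const_const (iteratedDeriv (m + 1) f x₀)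
        (one_ne_zero (α := ℝ)) (𝓝 x₀))
  refine (htaylor.isBigO.add htop).congr_left fun x => ?_
  abel

theorem isBigO_sub_taylor_three {E : Type*} [NormedAddCommGroup E] [NormedSpace ℝ E]
    {f : ℝ → E} {x₀ : ℝ} (hf : ContDiffAt ℝ 4 f x₀) :
    (fun x => f x - (f x₀ + (x - x₀) • deriv f x₀ + ((x - x₀) ^ 2 / 2) • deriv (deriv f) x₀ +
      ((x - x₀) ^ 3 / 6) • deriv (deriv (deriv f)) x₀)) =O[𝓝 x₀] fun x => (x - x₀) ^ 4 := by
  refine (isBigO_sub_taylor_sum (m := 3) (by exact_mod_cast hf)).congr_left fun x => ?_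
  simp only [Finset.sum_range_succ, Finset.sum_range_zero, iteratedDeriv_eq_iterate,
    Function.iterate_succ, Function.iterate_zero, Function.comp_apply, id_eq, Nat.factorial]
  module

theorem exists_forall_mem_Ioo_abs_le_of_isBigO_pow {f : ℝ → ℝ} {k : ℕ}
    (hf : f =O[𝓝[>] 0] fun s => s ^ k) :
    ∃ C > (0 : ℝ), ∃ ε > (0 : ℝ), ∀ s ∈ Set.Ioo (0 : ℝ) ε, |f s| ≤ C * s ^ k := by
  obtain ⟨C, hC, hbound⟩ := hf.exists_pos
  obtain ⟨ε, hε, hbound⟩ := mem_nhdsGT_iff_exists_Ioo_subset.1 hbound.bound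
  refine ⟨C, hC, ε, hε, fun s hs => ?_⟩
  simpa [abs_of_pos hs.1] using hbound hs

theorem abs_arctan_sub_cubic_le (x : ℝ) : |Real.arctan x - (x - x ^ 3 / 3)| ≤ |x| ^ 5 := by
  have hderiv (t : ℝ) :
      HasDerivAt (fun t => Real.arctan t - (t - t ^ 3 / 3)) (t ^ 4 / (1 + t ^ 2)) t := by
    have hcubic : HasDerivAt (fun t : ℝ => t ^ 3 / 3) (t ^ 2) t := by
      simpa using (hasDerivAt_pow 3 t).div_const 3
    refine ((Real.hasDerivAt_arctan t).sub ((hasDerivAt_id' t).sub hcubic)).congr_deriv ?_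
    field_simp
    ring
  have hbound (t : ℝ) (ht : t ∈ Set.Icc (-|x|) |x|) : ‖t ^ 4 / (1 + t ^ 2)‖ ≤ |x| ^ 4 := by
    rw [norm_div, norm_pow, Real.norm_eq_abs, Real.norm_of_nonneg (by positivity)]
    calc |t| ^ 4 / (1 + t ^ 2) ≤ |t| ^ 4 := div_le_self (by positivity) (by nlinarith)
      _ ≤ |x| ^ 4 := pow_le_pow_left₀ (abs_nonneg t) (abs_le.2 ht) 4
  simpa [pow_succ] using (convex_Icc (-|x|) |x|).norm_image_sub_le_of_norm_hasDerivWithin_le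
    (fun t _ => (hderiv t).hasDerivWithinAt) hbound (x := 0) (y := x)
    (by simp) ⟨neg_abs_le x, le_abs_self x⟩

theorem isBigO_arctan_comp_sub_cubic (hl : l ≤ 𝓝 0) {u : ℝ → ℝ} {p q : ℝ}
    (hu : (fun s => u s - (p * s + q * s ^ 3)) =O[l] fun s => s ^ 4) :
    (fun s => Real.arctan (u s) - (p * s + (q - p ^ 3 / 3) * s ^ 3)) =O[l] fun s => s ^ 4 := by
  have hu_sub : (fun s => u s - p * s) =O[l] fun s => s ^ 3 := by
    refine ((hu.trans (isBigO_pow_pow_of_le hl (by norm_num))).add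
      ((isBigO_refl (fun s : ℝ => s ^ 3) l).const_mul_left q)).congr_left fun s => ?_
    ring
  have hlin : (fun s => p * s) =O[l] fun s => s := (isBigO_refl _ l).const_mul_left p
  have hu_lin : u =O[l] fun s => s := by
    have hcubic_lin : (fun s : ℝ => s ^ 3) =O[l] fun s => s := by
      simpa only [pow_one] using isBigO_pow_pow_of_le hl (k := 1) (m := 3) (by norm_num)
    simpa using (hu_sub.trans hcubic_lin).add hlin
  have harctan : (fun s => Real.arctan (u s) - (u s - u s ^ 3 / 3)) =O[l] fun s => s ^ 4 := by
    have hquintic : (fun s => Real.arctan (u s) - (u s - u s ^ 3 / 3)) =O[l] fun s => u s ^ 5 :=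
      .of_bound' (.of_forall fun s => by simpa using abs_arctan_sub_cubic_le (u s))
    exact (hquintic.trans (hu_lin.pow 5)).trans (isBigO_pow_pow_of_le hl (by norm_num))
  have hcube : (fun s => u s ^ 3 - (p * s) ^ 3) =O[l] fun s => s ^ 4 := by
    have hfactor : (fun s => u s * u s + u s * (p * s) + p * s * (p * s)) =O[l] fun s => s * s :=
      ((hu_lin.mul hu_lin).add (hu_lin.mul hlin)).add (hlin.mul hlin)
    refine ((hu_sub.mul hfactor).congr (fun s => ?_) fun s => ?_).trans
      (isBigO_pow_pow_of_le hl (show 4 ≤ 5 by norm_num))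
    · ring
    · ring
  refine ((harctan.add hu).sub (hcube.const_mul_left (1 / 3))).congr_left fun s => ?_
  ring

theorem tendsto_zero_of_isBigO_sub_sq (hl : l ≤ 𝓝 0) {h : ℝ → ℝ} {b : ℝ}
    (hh : (fun s => h s - b * s ^ 2) =O[l] fun s => s ^ 3) : Tendsto h l (𝓝 0) := by
  have hpow_zero {k : ℕ} (hk : k ≠ 0) : Tendsto (fun s : ℝ => s ^ k) l (𝓝 0) := by
    simpa [hk] using ((continuous_pow (M := ℝ) k).tendsto 0).mono_left hl
  simpa using (hh.trans_tendsto (hpow_zero three_ne_zero)).add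
    ((hpow_zero two_ne_zero).const_mul b)

theorem isBigO_div_sub_cubic (hl : l ≤ 𝓝 0) {w h : ℝ → ℝ} {a b r : ℝ} (hr : r ≠ 0)
    (hw : (fun s => w s - (s + a * s ^ 3)) =O[l] fun s => s ^ 4)
    (hh : (fun s => h s - b * s ^ 2) =O[l] fun s => s ^ 3) :
    (fun s => w s / (r - h s) - (1 / r * s + (a / r + b / r ^ 2) * s ^ 3)) =O[l]
      fun s => s ^ 4 := by
  set quot : ℝ → ℝ := fun s => 1 / r * s + (a / r + b / r ^ 2) * s ^ 3 with hquot
  have hden : Tendsto (fun s => r - h s) l (𝓝 r) := by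
    simpa using (tendsto_zero_of_isBigO_sub_sq hl hh).const_sub r
  have hnum : (fun s => w s - (r - h s) * quot s) =O[l] fun s => s ^ 4 := by
    have hcross : (fun s => (h s - b * s ^ 2) * quot s) =O[l] fun s => s ^ 4 := by
      have hquot_lin : quot =O[l] fun s => s := by
        refine (isBigO_pow_mul_of_continuousAt hl
          (g := fun s => 1 / r + (a / r + b / r ^ 2) * s ^ 2) (by fun_prop) 1).congr
          (fun s => ?_) fun s => pow_one s
        simp only [hquot]
        ring
      exact (hh.mul hquot_lin).congr_right fun s => by ring
    have hquintic : (fun s => s ^ 4 * (b * (a / r + b / r ^ 2) * s)) =O[l] fun s => s ^ 4 :=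
      isBigO_pow_mul_of_continuousAt hl (by fun_prop) 4
    refine ((hw.add hcross).add hquintic).congr_left fun s => ?_
    simp only [hquot]
    field_simp
    ring
  have hinv : (fun s => (r - h s)⁻¹) =O[l] fun _ => (1 : ℝ) := (hden.inv₀ hr).isBigO_one ℝ
  refine (hnum.mul hinv).congr' ?_ (.of_forall fun s => mul_one _)
  filter_upwards [hden.eventually_ne hr] with s hs
  rw [← div_eq_mul_inv, sub_div, mul_div_cancel_left₀ _ hs]

end Asymptotics

section InnerProduct

variable {E : Type*} [NormedAddCommGroup E] [InnerProductSpace ℝ E]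

theorem inner_deriv_eq_zero_of_eventually_norm_eq {v : ℝ → E} {t c : ℝ}
    (hv : DifferentiableAt ℝ v t) (hnorm : ∀ᶠ u in 𝓝 t, ‖v u‖ = c) : ⟪v t, deriv v t⟫ = 0 := by
  have hconst : (fun u => ⟪v u, v u⟫) =ᶠ[𝓝 t] fun _ => c ^ 2 :=
    hnorm.mono fun u hu => by simp only [real_inner_self_eq_norm_sq, hu]
  have hderiv := hconst.deriv_eq
  rw [deriv_inner_apply ℝ hv hv, deriv_const,
    real_inner_comm (v t) (deriv v t)] at hderiv
  linarith

theorem inner_deriv_deriv_eq_neg_norm_sq_of_eventually_norm_eq {v : ℝ → E} {t c : ℝ}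
    (hv : ContDiffAt ℝ 2 v t) (hnorm : ∀ᶠ u in 𝓝 t, ‖v u‖ = c) :
    ⟪v t, deriv (deriv v) t⟫ = -‖deriv v t‖ ^ 2 := by
  have horth : (fun u => ⟪v u, deriv v u⟫) =ᶠ[𝓝 t] fun _ => 0 := by
    filter_upwards [hnorm.eventually_nhds, hv.eventually (by simp)] with u hu hvu
    exact inner_deriv_eq_zero_of_eventually_norm_eq (hvu.differentiableAt two_ne_zero) hu
  have hderiv := horth.deriv_eq
  rw [deriv_inner_apply ℝ (hv.differentiableAt two_ne_zero)
    ((hv.derivWithin (m := 1) le_rfl).differentiableAt one_ne_zero), deriv_const,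
    real_inner_self_eq_norm_sq] at hderiv
  linarith

theorem abs_norm_sub_inner_le {e : E} (he : ‖e‖ = 1) {s : ℝ} (hs : 0 < s) (v : E) :
    |‖v‖ - ⟪e, v⟫| ≤ ‖v - s • e‖ ^ 2 / (2 * s) := by
  have hlower : ⟪e, v⟫ ≤ ‖v‖ := by simpa [he] using real_inner_le_norm e v
  have hexpand : ‖v - s • e‖ ^ 2 = ‖v‖ ^ 2 - 2 * s * ⟪e, v⟫ + s ^ 2 := by
    rw [norm_sub_sq_real, real_inner_smul_right, real_inner_comm, norm_smul, he, mul_one,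
      Real.norm_eq_abs, sq_abs]
    ring
  rw [abs_of_nonneg (sub_nonneg.2 hlower), le_div_iff₀ (by positivity), hexpand]
  nlinarith [sq_nonneg (‖v‖ - s)]

theorem isBigO_norm_sub_inner {e : E} (he : ‖e‖ = 1) {v : ℝ → E} {k : ℕ}
    (hv : (fun s => v s - s • e) =O[𝓝[>] 0] fun s => s ^ (k + 1)) :
    (fun s => ‖v s‖ - ⟪e, v s⟫) =O[𝓝[>] 0] fun s => s ^ (2 * k + 1) := by
  have hquot : (fun s => ‖v s‖ - ⟪e, v s⟫) =O[𝓝[>] 0] fun s => ‖v s - s • e‖ ^ 2 / s := by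
    refine .of_bound (1 / 2) ?_
    filter_upwards [self_mem_nhdsWithin] with s (hs : 0 < s)
    rw [Real.norm_eq_abs, Real.norm_of_nonneg (by positivity)]
    exact (abs_norm_sub_inner_le he hs (v s)).trans_eq (by field_simp)
  refine (hquot.trans ((hv.norm_left.pow 2).mul (isBigO_refl (fun s => s⁻¹) _))).congr' .rfl ?_
  filter_upwards [self_mem_nhdsWithin] with s (hs : 0 < s)
  field_simp
  ring

theorem angle_add_smul_unit_eq_arctan {n : E} (hn : ‖n‖ = 1) {x z : E} {r : ℝ} (hr : 0 < r)
    (hz : ⟪n, z - x⟫ < r) :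
    ∠ x (x + r • n) z =
      Real.arctan (‖(z - x) - ⟪n, z - x⟫ • n‖ / (r - ⟪n, z - x⟫)) := by
  set h := ⟪n, z - x⟫ with hh
  have hrh : 0 < r - h := sub_pos.2 hz
  have hperp : ⟪(r - h) • -n, (z - x) - h • n⟫ = 0 := by
    rw [real_inner_smul_left, inner_neg_left, inner_sub_right, real_inner_smul_right, ← hh,
      real_inner_self_eq_norm_sq, hn]
    ring
  have hradial : x -ᵥ (x + r • n) = r • -n := by simp
  have hsplit : z -ᵥ (x + r • n) = (r - h) • -n + ((z - x) - h • n) := by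
    rw [vsub_eq_sub]
    module
  have hnorm : ‖(r - h) • -n‖ = r - h := by
    rw [norm_smul, norm_neg, hn, mul_one, Real.norm_of_nonneg hrh.le]
  rw [EuclideanGeometry.angle, hradial, hsplit, InnerProductGeometry.angle_smul_left_of_pos _ _ hr,
    ← InnerProductGeometry.angle_smul_left_of_pos _ _ hrh,
    InnerProductGeometry.angle_add_eq_arctan_of_inner_eq_zero hperp
      (norm_ne_zero_iff.1 (hnorm.trans_ne hrh.ne')), hnorm]


end InnerProduct

section SphericalDistance

variable {E : Type*} [NormedAddCommGroup E] [InnerProductSpace ℝ E]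
  {l : Filter ℝ} {y : ℝ → E} {e n j : E} {b : ℝ}

theorem isBigO_inner_normal_sub_sq (hn : ‖n‖ = 1) (hne : ⟪n, e⟫ = 0) (hl : l ≤ 𝓝 0)
    (hy : (fun s => y s - (s • e + (b * s ^ 2) • n + s ^ 3 • j)) =O[l] fun s => s ^ 4) :
    (fun s => ⟪n, y s⟫ - b * s ^ 2) =O[l] fun s => s ^ 3 := by
  have hinner := ((innerSL ℝ n).isBigO_comp _ l).trans
    (hy.trans (isBigO_pow_pow_of_le hl (show 3 ≤ 4 by norm_num)))
  refine (hinner.add ((isBigO_refl (fun s : ℝ => s ^ 3) l).const_mul_left ⟪n, j⟫)).congr_left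
    fun s => ?_
  simp only [innerSL_apply_apply, inner_sub_right, inner_add_right, real_inner_smul_right, hne,
    real_inner_self_eq_norm_sq, hn]
  ring

theorem isBigO_inner_tangent_sub_cubic (he : ‖e‖ = 1) (hne : ⟪n, e⟫ = 0)
    (hy : (fun s => y s - (s • e + (b * s ^ 2) • n + s ^ 3 • j)) =O[l] fun s => s ^ 4) :
    (fun s => ⟪e, y s⟫ - (s + ⟪e, j⟫ * s ^ 3)) =O[l] fun s => s ^ 4 := by
  refine (((innerSL ℝ e).isBigO_comp _ l).trans hy).congr_left fun s => ?_
  simp only [innerSL_apply_apply, inner_sub_right, inner_add_right, real_inner_smul_right,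
    real_inner_comm n e, hne, real_inner_self_eq_norm_sq, he]
  ring

theorem isBigO_norm_sub_inner_smul_sub_cubic (he : ‖e‖ = 1) (hn : ‖n‖ = 1) (hne : ⟪n, e⟫ = 0)
    (hy : (fun s => y s - (s • e + (b * s ^ 2) • n + s ^ 3 • j)) =O[𝓝[>] 0] fun s => s ^ 4) :
    (fun s => ‖y s - ⟪n, y s⟫ • n‖ - (s + ⟪e, j⟫ * s ^ 3)) =O[𝓝[>] 0] fun s => s ^ 4 := by
  have hl : 𝓝[>] (0 : ℝ) ≤ 𝓝 0 := nhdsWithin_le_nhds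
  have hdev : (fun s => y s - ⟪n, y s⟫ • n - s • e) =O[𝓝[>] 0] fun s : ℝ => s ^ 3 := by
    have hcubic_smul (v : E) {f : ℝ → ℝ} (hf : f =O[𝓝[>] 0] fun s => s ^ 3) :
        (fun s => f s • v) =O[𝓝[>] 0] fun s => s ^ 3 := by
      simpa using hf.smul (isBigO_const_const v (one_ne_zero (α := ℝ)) (𝓝[>] 0))
    refine (((hy.trans (isBigO_pow_pow_of_le hl (by norm_num))).add
      (hcubic_smul j (isBigO_refl _ _))).sub
      (hcubic_smul n (isBigO_inner_normal_sub_sq hn hne hl hy))).congr_left fun s => ?_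
    module
  have hnorm : (fun s => ‖y s - ⟪n, y s⟫ • n‖ - ⟪e, y s⟫) =O[𝓝[>] 0] fun s => s ^ 4 := by
    refine ((isBigO_norm_sub_inner he hdev).trans
      (isBigO_pow_pow_of_le hl (by norm_num))).congr_left fun s => ?_
    rw [inner_sub_right, real_inner_smul_right, real_inner_comm n e, hne, mul_zero, sub_zero]
  refine (hnorm.add (isBigO_inner_tangent_sub_cubic he hne hy)).congr_left fun s => ?_
  ring

theorem isBigO_mul_angle_sub_cubic {f : ℝ → E} {x : E} {r : ℝ}
    (he : ‖e‖ = 1) (hn : ‖n‖ = 1) (hne : ⟪n, e⟫ = 0) (hr : 0 < r)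
    (hf : (fun s => f s - x - (s • e + (b * s ^ 2) • n + s ^ 3 • j)) =O[𝓝[>] 0]
      fun s => s ^ 4) :
    (fun s => r * ∠ x (x + r • n) (f s) -
      (s + (⟪e, j⟫ + b / r - 1 / (3 * r ^ 2)) * s ^ 3)) =O[𝓝[>] 0] fun s => s ^ 4 := by
  have hl : 𝓝[>] (0 : ℝ) ≤ 𝓝 0 := nhdsWithin_le_nhds
  have hheight := isBigO_inner_normal_sub_sq hn hne hl hf
  have hwidth := isBigO_norm_sub_inner_smul_sub_cubic he hn hne hf
  have harctan := isBigO_arctan_comp_sub_cubic hl (isBigO_div_sub_cubic hl hr.ne' hwidth hheight)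
  refine (harctan.const_mul_left r).congr' ?_ .rfl
  filter_upwards [(tendsto_zero_of_isBigO_sub_sq hl hheight).eventually_lt_const hr] with s hs
  rw [angle_add_smul_unit_eq_arctan hn hr hs]
  field_simp

theorem stmt_4_general {γ : ℝ → E} (hγ : ContDiffAt ℝ 4 γ 0)
    (hunit : ∀ᶠ t in 𝓝 0, ‖deriv γ t‖ = 1) (hn : ‖n‖ = 1) (hperp : ⟪n, deriv γ 0⟫ = 0)
    {κ : ℝ} (hκ : deriv (deriv γ) 0 = κ • n) {r : ℝ} (hr : 0 < r)
    {c : E} (hc : c = γ 0 + r • n) :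
    (fun s => r * Real.arccos (⟪γ 0 - c, γ s - c⟫ / (r * ‖γ s - c‖)) -
      (s - (κ - 1 / r) * (κ - 2 / r) / 6 * s ^ 3)) =O[𝓝[>] 0] fun s => s ^ 4 := by
  have hspeed : ContDiffAt ℝ 2 (deriv γ) 0 := hγ.derivWithin (by norm_num)
  have hjerk : ⟪deriv γ 0, deriv (deriv (deriv γ)) 0⟫ = -κ ^ 2 := by
    rw [inner_deriv_deriv_eq_neg_norm_sq_of_eventually_norm_eq hspeed hunit, hκ, norm_smul, hn,
      mul_one, Real.norm_eq_abs, sq_abs]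
  have hradius : ‖γ 0 - c‖ = r := by simp [hc, norm_smul, hn, abs_of_pos hr]
  have htaylor : (fun s => γ s - γ 0 - (s • deriv γ 0 + (κ / 2 * s ^ 2) • n +
      s ^ 3 • (6⁻¹ : ℝ) • deriv (deriv (deriv γ)) 0)) =O[𝓝[>] 0] fun s => s ^ 4 := by
    refine ((isBigO_sub_taylor_three hγ).mono nhdsWithin_le_nhds).congr (fun s => ?_) fun s => ?_
    · rw [hκ, sub_zero]
      module
    · rw [sub_zero]
  refine (isBigO_mul_angle_sub_cubic hunit.self_of_nhds hn hperp hr htaylor).congr_left fun s => ?_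
  rw [real_inner_smul_right, hjerk, ← hc, EuclideanGeometry.angle, InnerProductGeometry.angle,
    vsub_eq_sub, vsub_eq_sub, hradius]
  ring

end SphericalDistance

/-- Part (1) of Corollary 1 of the paper: if the curvature `κ_y` of the unit-speed
curve `γ` at `x = γ(0)` (in the normal direction `n`) equals `κ₀` or `2κ₀`, where
`κ₀ = 1/r` is the curvature of the approximating sphere of center `c = x + r n`,
then the spherical distance estimate has fourth-order error. -/
theorem stmt_4 {D : ℕ} (γ : ℝ → EuclideanSpace ℝ (Fin D))
    (hγ : ContDiff ℝ (⊤ : ℕ∞) γ)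
    (hunit : ∀ t : ℝ, ‖deriv γ t‖ = 1)
    (x : EuclideanSpace ℝ (Fin D)) (hx : x = γ 0)
    (n : EuclideanSpace ℝ (Fin D)) (hn : ‖n‖ = 1)
    (hperp : ⟪n, deriv γ 0⟫ = 0)
    (κy : ℝ) (hκy : deriv (deriv γ) 0 = κy • n)
    (κ₀ : ℝ) (hκ₀ : 0 < κ₀)
    (r : ℝ) (hr : r = 1 / κ₀)
    (c : EuclideanSpace ℝ (Fin D)) (hc : c = x + r • n)
    (hcase : κy = κ₀ ∨ κy = 2 * κ₀) :
    ∃ C > (0 : ℝ), ∃ ε > (0 : ℝ), ∀ s ∈ Set.Ioo (0 : ℝ) ε,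
      |r * Real.arccos (⟪x - c, γ s - c⟫ / (r * ‖γ s - c‖)) - s| ≤ C * s ^ 4 := by
  subst hx
  have hvanish : (κy - 1 / r) * (κy - 2 / r) = 0 := by
    rcases hcase with rfl | rfl <;> simp [hr, div_eq_mul_inv]
  have hexpansion := stmt_4_general (contDiff_infty.1 hγ 4).contDiffAt (.of_forall hunit) hn hperp
    hκy (hr ▸ one_div_pos.2 hκ₀) hc
  simpa only [hvanish, zero_div, zero_mul, sub_zero] using
    exists_forall_mem_Ioo_abs_le_of_isBigO_pow hexpansion
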